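/- arXiv:1910.07606 — 2 statements merged into one kernel-verified Lean document; each statement's English description precedes it below -/
import Mathlib

section
/- Let {φ_n} be a semi-regular sequence in a Hilbert space H, with associated positive symmetric operator S (Sφ_n = ψ_n, the biorthogonal sequence). If the Friedrichs extension A_F of S is positive, then {φ_n} is a generalized Riesz system: writing A_F = e^{-Q} with Q = -ln A_F self-adjoint, the vectors e_n := e^{-Q/2}φ_n form an orthonormal basis of H, e_n ∈ D(e^{Q/2}) ∩ D(e^{-Q/2}), and φ_n = e^{Q/2}e_n. -/
open scoped ComplexInnerProductSpace
open Filter Topology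

noncomputable section

variable {H : Type*} [NormedAddCommGroup H] [InnerProductSpace ℂ H] [CompleteSpace H]

/-- `A` is a nonnegative (possibly unbounded) operator. -/
def LinearPMap.IsNonneg (A : H →ₗ.[ℂ] H) : Prop :=
  ∀ f : A.domain, 0 ≤ (⟪A f, (f : H)⟫).re

/-- `A` is a positive operator. -/
def LinearPMap.IsPositive (A : H →ₗ.[ℂ] H) : Prop :=
  ∀ f : A.domain, (f : H) ≠ 0 → 0 < (⟪A f, (f : H)⟫).re

/-- `R` is a square root of `A`. -/
def IsSqrtOf (R A : H →ₗ.[ℂ] H) : Prop :=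
  (∀ x : H, x ∈ A.domain ↔ ∃ hx : x ∈ R.domain, R ⟨x, hx⟩ ∈ R.domain) ∧
  ∀ (x : A.domain) (hx : (x : H) ∈ R.domain) (hx2 : R ⟨(x : H), hx⟩ ∈ R.domain),
    A x = R ⟨R ⟨(x : H), hx⟩, hx2⟩

/-- The form order `A ≥ B` expressed via square roots. -/
def FormGE (sA sB : H →ₗ.[ℂ] H) : Prop :=
  sA.domain ≤ sB.domain ∧
  ∀ (f : sA.domain) (hf : (f : H) ∈ sB.domain), ‖sB ⟨(f : H), hf⟩‖ ≤ ‖sA f‖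

/-- `{e_n}` is an orthonormal basis of `H`. -/
def IsONB (e : ℕ → H) : Prop :=
  Orthonormal ℂ e ∧ Dense ((Submodule.span ℂ (Set.range e) : Submodule ℂ H) : Set H)

/-- `(A_F, sAF)` is the Friedrichs extension of `S` (with its square root): it is a nonnegative
self-adjoint extension of `S` which is greatest in the form order among all nonnegative
self-adjoint extensions of `S`. -/
def IsFriedrichsExtOf (AF sAF S : H →ₗ.[ℂ] H) : Prop :=
  IsSelfAdjoint AF ∧ AF.IsNonneg ∧ S ≤ AF ∧
  IsSelfAdjoint sAF ∧ sAF.IsNonneg ∧ IsSqrtOf sAF AF ∧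
  ∀ B sB : H →ₗ.[ℂ] H, IsSelfAdjoint B → B.IsNonneg → S ≤ B →
    IsSelfAdjoint sB → sB.IsNonneg → IsSqrtOf sB B → FormGE sAF sB

/-- `{φ_n}` is a generalized Riesz system: `φ_n = e^{Q/2} e_n` for a self-adjoint operator `Q`
and an orthonormal basis `{e_n}` with `e_n ∈ D(e^{Q/2}) ∩ D(e^{-Q/2})`.  Here `E = e^{Q/2}` and
`F = e^{-Q/2}` are encoded as a pair of mutually inverse positive self-adjoint operators
(`Q = 2 ln E` is then self-adjoint). -/
def IsGRS (φ : ℕ → H) : Prop :=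
  ∃ (E F : H →ₗ.[ℂ] H) (e : ℕ → H),
    IsSelfAdjoint E ∧ IsSelfAdjoint F ∧ E.IsPositive ∧ F.IsPositive ∧
    (∀ x : E.domain, ∃ h : E x ∈ F.domain, F ⟨E x, h⟩ = (x : H)) ∧
    (∀ y : F.domain, ∃ h : F y ∈ E.domain, E ⟨F y, h⟩ = (y : H)) ∧
    IsONB e ∧
    ∀ n, ∃ (h1 : e n ∈ E.domain) (_ : e n ∈ F.domain), φ n = E ⟨e n, h1⟩

/-!
The square root `R` of the Friedrichs extension satisfies `⟪R φ n, R φ m⟫ = ⟪ψ n, φ m⟫ = δ n m`, so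
only completeness of `e n = R φ n` is at stake. As `R` is injective and self-adjoint, its range is
dense, and completeness follows once `D(S)`, the span of the `φ n`, is a core of `R`. Let `T` be the
closure of `R` restricted to `D(S)`. Then `T† T` is a nonnegative self-adjoint extension of `S`
whose square root has domain inside that of `T`; maximality of the Friedrichs extension in the form
order gives `D(R) ≤ D(T)`, hence `T = R`.

The functional calculus for unbounded operators is avoided by working with the bounded operator
`G = (1 + T† T)⁻¹`, read off from the orthogonal projection onto the graph of `T`: the operator
`T† T` is `(1 - G) G⁻¹`, and its square root is `√(1 - G) (√G)⁻¹`.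
-/

section Graph

variable {R E F G : Type*} [Ring R] [AddCommGroup E] [Module R E] [AddCommGroup F] [Module R F]
  [AddCommGroup G] [Module R G]

theorem mem_graph_iff_exists_apply_eq {f : E →ₗ.[R] F} {x : E} {y : F} :
    (x, y) ∈ f.graph ↔ ∃ h : x ∈ f.domain, f ⟨x, h⟩ = y := by
  simp [LinearPMap.mem_graph_iff]

theorem mem_graph_inverse_iff {f : E →ₗ.[R] F} (hf : f.toFun.ker = ⊥) {x : E} {y : F} :
    (y, x) ∈ f.inverse.graph ↔ (x, y) ∈ f.graph := by
  simp [LinearPMap.inverse_graph hf]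

/-- The operator `C P⁻¹` with domain the range of `P`, defined by its graph `{(P x, C x)}`. It is
only meaningful if `ker P ≤ ker C`; otherwise it takes the value `0` on the range of `P`. -/
def rightDiv (C : E →ₗ[R] G) (P : E →ₗ[R] F) : F →ₗ.[R] G :=
  (P.prod C).range.toLinearPMap

theorem rightDiv_domain (C : E →ₗ[R] G) (P : E →ₗ[R] F) : (rightDiv C P).domain = P.range := by
  rw [rightDiv, Submodule.toLinearPMap_domain, LinearMap.range_eq_map, ← Submodule.map_comp,
    LinearMap.fst_prod, ← LinearMap.range_eq_map]

theorem mem_graph_rightDiv_iff {C : E →ₗ[R] G} {P : E →ₗ[R] F} (hP : Function.Injective P)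
    {y : F} {z : G} : (y, z) ∈ (rightDiv C P).graph ↔ ∃ x, P x = y ∧ C x = z := by
  rw [rightDiv, Submodule.toLinearPMap_graph_eq]
  · simp
  · rintro _ ⟨x, rfl⟩ hx
    have : x = 0 := (map_eq_zero_iff P hP).mp hx
    simp [this]

/-- Every solution of `C y = P z` is of the form `(y, z) = (P x, C x)`: for commuting operators,
an analogue of coprimality, which makes `C P⁻¹` as large as self-adjointness requires. -/
def IsCoprimePair (P C : E →ₗ[R] E) : Prop :=
  ∀ y z, C y = P z → ∃ x, P x = y ∧ C x = z

theorem isCoprimePair_of_add_eq_one {P C : Module.End R E} (h : P + C = 1) :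
    IsCoprimePair P C := by
  intro y z hyz
  have hadd : ∀ x, P x + C x = x := LinearMap.congr_fun h
  exact ⟨y + z, by rw [map_add, ← hyz, hadd], by rw [map_add, hyz, hadd]⟩

theorem isCoprimePair_of_mul_self_add_mul_self_eq_one {P C : Module.End R E} (hPC : Commute P C)
    (h : P * P + C * C = 1) : IsCoprimePair P C := by
  intro y z hyz
  have hadd : ∀ x, P (P x) + C (C x) = x := LinearMap.congr_fun h
  have hcomm : ∀ x, P (C x) = C (P x) := LinearMap.congr_fun hPC
  exact ⟨P y + C z, by rw [map_add, hcomm, ← hyz, hadd], by rw [map_add, ← hcomm, hyz, hadd]⟩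

end Graph

section SquareRoot

variable {E : Type*} [NormedAddCommGroup E] [InnerProductSpace ℂ E]

theorem isSqrtOf_iff_mem_graph {R A : E →ₗ.[ℂ] E} :
    IsSqrtOf R A ↔ ∀ x z, (x, z) ∈ A.graph ↔ ∃ y, (x, y) ∈ R.graph ∧ (y, z) ∈ R.graph := by
  simp only [mem_graph_iff_exists_apply_eq]
  constructor
  · rintro ⟨hdom, happly⟩ x z
    constructor
    · rintro ⟨hx, rfl⟩
      obtain ⟨hxR, hRx⟩ := (hdom x).1 hx
      exact ⟨_, ⟨hxR, rfl⟩, hRx, (happly ⟨x, hx⟩ hxR hRx).symm⟩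
    · rintro ⟨_, ⟨hxR, rfl⟩, hRx, rfl⟩
      have hx := (hdom x).2 ⟨hxR, hRx⟩
      exact ⟨hx, happly ⟨x, hx⟩ hxR hRx⟩
  · intro h
    refine ⟨fun x => ⟨fun hx => ?_, ?_⟩, fun x hxR hRx => ?_⟩
    · obtain ⟨_, ⟨hxR, rfl⟩, hRx, -⟩ := (h x _).1 ⟨hx, rfl⟩
      exact ⟨hxR, hRx⟩
    · rintro ⟨hxR, hRx⟩
      exact ((h x _).2 ⟨_, ⟨hxR, rfl⟩, hRx, rfl⟩).1
    · exact ((h x _).2 ⟨_, ⟨hxR, rfl⟩, hRx, rfl⟩).2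

theorem isSqrtOf_rightDiv {P C : Module.End ℂ E} (hP : Function.Injective P) (hPC : Commute P C)
    (hcop : IsCoprimePair P C) : IsSqrtOf (rightDiv C P) (rightDiv (C * C) (P * P)) := by
  have hcomm : ∀ x, P (C x) = C (P x) := LinearMap.congr_fun hPC
  simp only [isSqrtOf_iff_mem_graph, mem_graph_rightDiv_iff hP,
    mem_graph_rightDiv_iff (P := P * P) (hP.comp hP)]
  intro x z
  constructor
  · rintro ⟨u, rfl, rfl⟩
    exact ⟨C (P u), ⟨P u, rfl, rfl⟩, C u, hcomm u, rfl⟩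
  · rintro ⟨_, ⟨u, rfl, rfl⟩, w, hw, rfl⟩
    obtain ⟨v, rfl, rfl⟩ := hcop u w hw.symm
    exact ⟨v, rfl, rfl⟩

end SquareRoot

section SelfAdjoint

open scoped InnerProductSpace

variable {𝕜 E F : Type*} [RCLike 𝕜] [NormedAddCommGroup E] [InnerProductSpace 𝕜 E]
  [CompleteSpace E] [NormedAddCommGroup F] [InnerProductSpace 𝕜 F]

theorem mem_graph_adjoint_iff {T : E →ₗ.[𝕜] F} (hT : Dense (T.domain : Set E)) {y : F} {z : E} :
    (y, z) ∈ T.adjoint.graph ↔ ∀ a b, (a, b) ∈ T.graph → ⟪b, y⟫_𝕜 = ⟪a, z⟫_𝕜 := by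
  simp only [LinearPMap.adjoint_graph_eq_graph_adjoint hT, Submodule.mem_adjoint_iff, sub_eq_zero]

theorem isSelfAdjoint_iff_mem_graph {A : E →ₗ.[𝕜] E} (hA : Dense (A.domain : Set E)) :
    IsSelfAdjoint A ↔
      ∀ y z, (y, z) ∈ A.graph ↔ ∀ a b, (a, b) ∈ A.graph → ⟪b, y⟫_𝕜 = ⟪a, z⟫_𝕜 := by
  simp only [← mem_graph_adjoint_iff hA]
  rw [LinearPMap.isSelfAdjoint_def, ← Prod.forall (p := fun p => p ∈ A.graph ↔ p ∈ _),
    ← SetLike.ext_iff]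
  exact ⟨fun h => by rw [h], fun h => (LinearPMap.eq_of_eq_graph h).symm⟩

theorem mem_graph_iff_of_isSelfAdjoint {A : E →ₗ.[𝕜] E} (hA : IsSelfAdjoint A) {y z : E} :
    (y, z) ∈ A.graph ↔ ∀ a b, (a, b) ∈ A.graph → ⟪b, y⟫_𝕜 = ⟪a, z⟫_𝕜 :=
  (isSelfAdjoint_iff_mem_graph hA.dense_domain).1 hA y z

theorem inner_apply_eq_inner_apply_of_isSelfAdjoint {A : E →ₗ.[𝕜] E} (hA : IsSelfAdjoint A)
    (x y : A.domain) : ⟪A x, (y : E)⟫_𝕜 = ⟪(x : E), A y⟫_𝕜 :=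
  (mem_graph_iff_of_isSelfAdjoint hA).1 (A.mem_graph y) _ _ (A.mem_graph x)

theorem dense_range_of_isSelfAdjoint_of_ker_eq_bot {A : E →ₗ.[𝕜] E} (hA : IsSelfAdjoint A)
    (hker : A.toFun.ker = ⊥) : Dense (Set.range A) := by
  change Dense (A.toFun.range : Set E)
  rw [Submodule.dense_iff_topologicalClosure_eq_top, Submodule.topologicalClosure_eq_top_iff,
    Submodule.eq_bot_iff]
  intro z hz
  have hz0 : (z, 0) ∈ A.graph := by
    refine (mem_graph_iff_of_isSelfAdjoint hA).2 fun a b hab => ?_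
    obtain ⟨ha, rfl⟩ := mem_graph_iff_exists_apply_eq.1 hab
    rw [inner_zero_right]
    exact (Submodule.mem_orthogonal _ _).1 hz _ ⟨⟨a, ha⟩, rfl⟩
  obtain ⟨hzdom, hAz⟩ := mem_graph_iff_exists_apply_eq.1 hz0
  exact congrArg Subtype.val (LinearMap.ker_eq_bot'.1 hker ⟨z, hzdom⟩ hAz)

theorem isSelfAdjoint_inverse {A : E →ₗ.[𝕜] E} (hA : IsSelfAdjoint A)
    (hker : A.toFun.ker = ⊥) : IsSelfAdjoint A.inverse := by
  have hdense : Dense (A.inverse.domain : Set E) := by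
    rw [LinearPMap.inverse_domain]
    exact dense_range_of_isSelfAdjoint_of_ker_eq_bot hA hker
  refine (isSelfAdjoint_iff_mem_graph hdense).2 fun y z => ?_
  rw [mem_graph_inverse_iff hker, mem_graph_iff_of_isSelfAdjoint hA]
  simp only [mem_graph_inverse_iff hker]
  exact ⟨fun h a b hab => (h b a hab).symm, fun h a b hab => (h b a hab).symm⟩

theorem denseRange_of_isSelfAdjoint_of_injective {P : E →L[𝕜] E} (hP : IsSelfAdjoint P)
    (hinj : Function.Injective P) : DenseRange P := by
  change Dense (P.range : Set E)
  rw [Submodule.dense_iff_topologicalClosure_eq_top, Submodule.topologicalClosure_eq_top_iff,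
    ContinuousLinearMap.orthogonal_range, hP.adjoint_eq]
  exact LinearMap.ker_eq_bot.2 hinj

theorem isSelfAdjoint_rightDiv {P C : E →L[𝕜] E} (hP : IsSelfAdjoint P) (hC : IsSelfAdjoint C)
    (hinj : Function.Injective P) (hPC : Commute P C)
    (hcop : IsCoprimePair (P : E →ₗ[𝕜] E) (C : E →ₗ[𝕜] E)) :
    IsSelfAdjoint (rightDiv (C : E →ₗ[𝕜] E) (P : E →ₗ[𝕜] E)) := by
  have hdense : Dense ((rightDiv (C : E →ₗ[𝕜] E) (P : E →ₗ[𝕜] E)).domain : Set E) := by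
    rw [rightDiv_domain]
    exact denseRange_of_isSelfAdjoint_of_injective hP hinj
  refine (isSelfAdjoint_iff_mem_graph hdense).2 fun y z => ?_
  have hadj : (∀ a b, (a, b) ∈ (rightDiv (C : E →ₗ[𝕜] E) (P : E →ₗ[𝕜] E)).graph →
      ⟪b, y⟫_𝕜 = ⟪a, z⟫_𝕜) ↔ C y = P z := by
    calc
      _ ↔ ∀ x, ⟪C x, y⟫_𝕜 = ⟪P x, z⟫_𝕜 := by
        simp only [mem_graph_rightDiv_iff (P := (P : E →ₗ[𝕜] E)) hinj]
        exact ⟨fun h x => h _ _ ⟨x, rfl, rfl⟩, by rintro h _ _ ⟨x, rfl, rfl⟩; exact h x⟩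
      _ ↔ ∀ x, ⟪x, C y⟫_𝕜 = ⟪x, P z⟫_𝕜 := by
        simp only [← ContinuousLinearMap.adjoint_inner_right, hP.adjoint_eq, hC.adjoint_eq]
      _ ↔ C y = P z := ⟨ext_inner_left 𝕜, fun h x => by rw [h]⟩
  rw [hadj, mem_graph_rightDiv_iff hinj]
  refine ⟨?_, hcop y z⟩
  rintro ⟨x, rfl, rfl⟩
  exact (DFunLike.congr_fun hPC x).symm

end SelfAdjoint

section Nonneg

variable {E : Type*} [NormedAddCommGroup E] [InnerProductSpace ℂ E]

theorem isNonneg_iff_mem_graph {A : E →ₗ.[ℂ] E} :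
    A.IsNonneg ↔ ∀ x y, (x, y) ∈ A.graph → 0 ≤ (⟪y, x⟫).re := by
  simp only [mem_graph_iff_exists_apply_eq]
  exact ⟨by rintro h _ _ ⟨hx, rfl⟩; exact h ⟨_, hx⟩, fun h x => h _ _ ⟨x.2, rfl⟩⟩

theorem isPositive_iff_mem_graph {A : E →ₗ.[ℂ] E} :
    A.IsPositive ↔ ∀ x y, (x, y) ∈ A.graph → x ≠ 0 → 0 < (⟪y, x⟫).re := by
  simp only [mem_graph_iff_exists_apply_eq]
  exact ⟨by rintro h _ _ ⟨hx, rfl⟩; exact h ⟨_, hx⟩, fun h x => h _ _ ⟨x.2, rfl⟩⟩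

theorem ker_eq_bot_of_isPositive {A : E →ₗ.[ℂ] E} (hA : A.IsPositive) : A.toFun.ker = ⊥ := by
  refine LinearMap.ker_eq_bot'.2 fun x hx => ?_
  by_contra hne
  have hpos := hA x fun h => hne (Subtype.ext h)
  rw [← LinearPMap.toFun_eq_coe, hx, inner_zero_left] at hpos
  exact lt_irrefl _ hpos

theorem ker_eq_bot_of_isSqrtOf {R A : E →ₗ.[ℂ] E} (hR : IsSqrtOf R A)
    (hA : A.toFun.ker = ⊥) : R.toFun.ker = ⊥ := by
  refine LinearMap.ker_eq_bot'.2 fun x hx => ?_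
  have hxR : ((x : E), (0 : E)) ∈ R.graph := hx ▸ R.mem_graph x
  have hxA : ((x : E), (0 : E)) ∈ A.graph :=
    (isSqrtOf_iff_mem_graph.1 hR _ _).2 ⟨0, hxR, R.graph.zero_mem⟩
  obtain ⟨hxdom, hAx⟩ := mem_graph_iff_exists_apply_eq.1 hxA
  exact Subtype.ext (congrArg Subtype.val (LinearMap.ker_eq_bot'.1 hA ⟨x, hxdom⟩ hAx) :)

theorem isPositive_inverse {A : E →ₗ.[ℂ] E} (hA : A.IsPositive) : A.inverse.IsPositive := by
  refine isPositive_iff_mem_graph.2 fun y x hyx hy => ?_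
  rw [mem_graph_inverse_iff (ker_eq_bot_of_isPositive hA)] at hyx
  have hx : x ≠ 0 := fun h => hy (A.graph_fst_eq_zero_snd hyx h)
  rw [← inner_conj_symm, Complex.conj_re]
  exact isPositive_iff_mem_graph.1 hA x y hyx hx

end Nonneg

section NonnegSelfAdjoint

variable {E : Type*} [NormedAddCommGroup E] [InnerProductSpace ℂ E] [CompleteSpace E]

theorem isNonneg_rightDiv {P C : E →L[ℂ] E} (hP : 0 ≤ P) (hC : 0 ≤ C)
    (hinj : Function.Injective P) (hPC : Commute P C) :
    (rightDiv (C : E →ₗ[ℂ] E) (P : E →ₗ[ℂ] E)).IsNonneg := by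
  refine isNonneg_iff_mem_graph.2 fun y z hyz => ?_
  obtain ⟨x, rfl, rfl⟩ := (mem_graph_rightDiv_iff (P := (P : E →ₗ[ℂ] E)) hinj).1 hyz
  have hPC_nonneg := (ContinuousLinearMap.nonneg_iff_isPositive _).1 (hPC.mul_nonneg hP hC)
  have hP_pos := (ContinuousLinearMap.nonneg_iff_isPositive P).1 hP
  rw [ContinuousLinearMap.coe_coe, ContinuousLinearMap.coe_coe, ← hP_pos.inner_left_eq_inner_right]
  exact hPC_nonneg.re_inner_nonneg_left x

/-- The form of a nonnegative self-adjoint operator as a semidefinite inner product, which gives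
access to the Cauchy-Schwarz inequality for that form. -/
abbrev formCore {A : E →ₗ.[ℂ] E} (hA : IsSelfAdjoint A) (hA0 : A.IsNonneg) :
    PreInnerProductSpace.Core ℂ A.domain where
  inner x y := ⟪A x, (y : E)⟫
  conj_inner_symm x y := by rw [inner_conj_symm, inner_apply_eq_inner_apply_of_isSelfAdjoint hA]
  re_inner_nonneg := hA0
  add_left x y z := by rw [A.map_add, inner_add_left]
  smul_left x y r := by rw [A.map_smul, inner_smul_left]

theorem apply_eq_zero_of_re_inner_self_eq_zero {A : E →ₗ.[ℂ] E} (hA : IsSelfAdjoint A)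
    (hA0 : A.IsNonneg) {x : A.domain} (hx : (⟪A x, (x : E)⟫).re = 0) : A x = 0 := by
  refine hA.dense_domain.eq_zero_of_inner_left ℂ fun y hy => ?_
  have cauchy_schwarz : ‖⟪A x, y⟫‖ * ‖⟪A ⟨y, hy⟩, (x : E)⟫‖ ≤ (⟪A x, (x : E)⟫).re * _ :=
    InnerProductSpace.Core.inner_mul_inner_self_le (c := formCore hA hA0) x ⟨y, hy⟩
  have hsymm : ‖⟪A ⟨y, hy⟩, (x : E)⟫‖ = ‖⟪A x, y⟫‖ := by
    rw [inner_apply_eq_inner_apply_of_isSelfAdjoint hA, norm_inner_symm]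
  rw [hx, zero_mul, hsymm] at cauchy_schwarz
  exact norm_eq_zero.1 (mul_self_eq_zero.1 (cauchy_schwarz.antisymm (mul_self_nonneg _)))

theorem isPositive_of_isNonneg {A : E →ₗ.[ℂ] E} (hA : IsSelfAdjoint A) (hA0 : A.IsNonneg)
    (hker : A.toFun.ker = ⊥) : A.IsPositive := by
  intro x hx
  refine (hA0 x).lt_of_ne' fun h => hx ?_
  have hAx := apply_eq_zero_of_re_inner_self_eq_zero hA hA0 h
  exact congrArg Subtype.val (LinearMap.ker_eq_bot'.1 hker x hAx)

end NonnegSelfAdjoint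
section VonNeumann

variable {E F : Type*} [NormedAddCommGroup E] [InnerProductSpace ℂ E] [CompleteSpace E]
  [NormedAddCommGroup F] [InnerProductSpace ℂ F]

/-- `G = (1 + T† T)⁻¹` and `Y = T G`, where `T†` is the adjoint of `T`, phrased without inverses:
`y = Y x` and `g = G x` satisfy `y = T g` and `x - g = T† y`. -/
structure IsGraphResolvent (T : E →ₗ.[ℂ] F) (G : E →L[ℂ] E) (Y : E →L[ℂ] F) : Prop where
  mem_graph : ∀ x, (G x, Y x) ∈ T.graph
  mem_graph_adjoint : ∀ x, (Y x, x - G x) ∈ T.adjoint.graph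

-- `(G x, Y x)` is the orthogonal projection of `(x, 0)` onto the graph of `T`.
theorem exists_isGraphResolvent [CompleteSpace F] {T : E →ₗ.[ℂ] F} (hT : T.IsClosed)
    (hdense : Dense (T.domain : Set E)) : ∃ G Y, IsGraphResolvent T G Y := by
  let e := WithLp.prodContinuousLinearEquiv 2 ℂ E F
  let K : Submodule ℂ (WithLp 2 (E × F)) := T.graph.comap (e : WithLp 2 (E × F) →ₗ[ℂ] E × F)
  have hK : IsClosed (K : Set (WithLp 2 (E × F))) := hT.preimage e.continuous
  have : CompleteSpace K := hK.completeSpace_coe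
  let proj : E →L[ℂ] E × F :=
    e.toContinuousLinearMap ∘L K.starProjection ∘L e.symm.toContinuousLinearMap ∘L
      ContinuousLinearMap.inl ℂ E F
  refine ⟨.fst ℂ E F ∘L proj, .snd ℂ E F ∘L proj,
    fun x => K.starProjection_apply_mem (WithLp.toLp 2 (x, 0)), fun x => ?_⟩
  refine (mem_graph_adjoint_iff hdense).2 fun a b hab => ?_
  have horth := K.inner_right_of_mem_orthogonal (u := WithLp.toLp 2 (a, b)) hab
    (K.sub_starProjection_mem_orthogonal (WithLp.toLp 2 (x, 0)))
  simp only [WithLp.prod_inner_apply, WithLp.ofLp_sub, Prod.fst_sub, Prod.snd_sub, zero_sub,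
    inner_neg_right] at horth
  exact (add_neg_eq_zero.1 horth).symm

namespace IsGraphResolvent

variable {T : E →ₗ.[ℂ] F} {G : E →L[ℂ] E} {Y : E →L[ℂ] F}

theorem inner_apply_apply (h : IsGraphResolvent T G Y) (hdense : Dense (T.domain : Set E))
    (x y : E) : ⟪G x, y⟫ = ⟪G x, G y⟫ + ⟪Y x, Y y⟫ := by
  rw [(mem_graph_adjoint_iff hdense).1 (h.mem_graph_adjoint y) _ _ (h.mem_graph x),
    ← inner_add_right, add_sub_cancel]

theorem isSymmetric (h : IsGraphResolvent T G Y) (hdense : Dense (T.domain : Set E)) :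
    (G : E →ₗ[ℂ] E).IsSymmetric := by
  intro x y
  rw [ContinuousLinearMap.coe_coe, ← inner_conj_symm x, h.inner_apply_apply hdense x,
    h.inner_apply_apply hdense y, map_add, inner_conj_symm, inner_conj_symm]

theorem nonneg (h : IsGraphResolvent T G Y) (hdense : Dense (T.domain : Set E)) : 0 ≤ G := by
  rw [ContinuousLinearMap.nonneg_iff_isPositive, ContinuousLinearMap.isPositive_def]
  refine ⟨h.isSymmetric hdense, fun x => ?_⟩
  rw [ContinuousLinearMap.reApplyInnerSelf_apply, h.inner_apply_apply hdense, map_add]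
  exact add_nonneg inner_self_nonneg inner_self_nonneg

theorem le_one (h : IsGraphResolvent T G Y) (hdense : Dense (T.domain : Set E)) : G ≤ 1 := by
  rw [ContinuousLinearMap.le_def, ContinuousLinearMap.isPositive_def]
  refine ⟨LinearMap.IsSymmetric.sub (fun _ _ => rfl) (h.isSymmetric hdense), fun x => ?_⟩
  have hsplit : ⟪x - G x, x⟫ = ⟪x - G x, x - G x⟫ + ⟪Y x, Y x⟫ := by
    have hG := h.inner_apply_apply hdense x x
    have hsymm : ⟪G x, x⟫ = ⟪x, G x⟫ := h.isSymmetric hdense x x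
    simp only [inner_sub_left, inner_sub_right]
    linear_combination hG - hsymm
  change 0 ≤ RCLike.re ⟪x - G x, x⟫
  rw [hsplit, map_add]
  exact add_nonneg inner_self_nonneg inner_self_nonneg

theorem injective (h : IsGraphResolvent T G Y) : Function.Injective G := by
  refine (injective_iff_map_eq_zero G).2 fun x hx => ?_
  have hY : Y x = 0 := T.graph_fst_eq_zero_snd (h.mem_graph x) hx
  have hsub : x - G x = 0 := T.adjoint.graph_fst_eq_zero_snd (h.mem_graph_adjoint x) hY
  rwa [hx, sub_zero] at hsub

theorem apply_add_eq (h : IsGraphResolvent T G Y) (hdense : Dense (T.domain : Set E))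
    {x z : E} {y : F} (hxy : (x, y) ∈ T.graph) (hyz : (y, z) ∈ T.adjoint.graph) :
    G (x + z) = x := by
  set u := x + z
  have hT : (x - G u, y - Y u) ∈ T.graph := T.graph.sub_mem hxy (h.mem_graph u)
  have hT' : (y - Y u, z - (u - G u)) ∈ T.adjoint.graph :=
    T.adjoint.graph.sub_mem hyz (h.mem_graph_adjoint u)
  have hinner := (mem_graph_adjoint_iff hdense).1 hT' _ _ hT
  rw [show z - (u - G u) = -(x - G u) by simp only [u]; abel, inner_neg_right] at hinner
  have hnorm : ‖y - Y u‖ ^ 2 = -‖x - G u‖ ^ 2 := by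
    simpa [inner_self_eq_norm_sq_to_K, ← Complex.ofReal_pow] using congrArg Complex.re hinner
  have hzero : ‖x - G u‖ ^ 2 = 0 := by
    linarith [sq_nonneg ‖y - Y u‖, sq_nonneg ‖x - G u‖]
  exact (sub_eq_zero.1 (norm_eq_zero.1 (sq_eq_zero_iff.1 hzero))).symm

theorem mem_graph_rightDiv_one_sub_iff (h : IsGraphResolvent T G Y)
    (hdense : Dense (T.domain : Set E)) {x z : E} :
    (x, z) ∈ (rightDiv ((1 - G : E →L[ℂ] E) : E →ₗ[ℂ] E) (G : E →ₗ[ℂ] E)).graph ↔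
      ∃ y, (x, y) ∈ T.graph ∧ (y, z) ∈ T.adjoint.graph := by
  rw [mem_graph_rightDiv_iff (h.injective)]
  constructor
  · rintro ⟨u, rfl, rfl⟩
    exact ⟨Y u, h.mem_graph u, h.mem_graph_adjoint u⟩
  · rintro ⟨y, hxy, hyz⟩
    have hG := h.apply_add_eq hdense hxy hyz
    refine ⟨x + z, hG, ?_⟩
    change x + z - G (x + z) = z
    rw [hG, add_sub_cancel_left]

-- `‖T G x‖ ≤ ‖P x‖` makes `T` bounded relative to `P⁻¹` on the range of `G`, so `T P` extends from
-- the dense range of `P` to a bounded operator, and closedness of `T` identifies the extension.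
theorem apply_mem_domain [CompleteSpace F] (h : IsGraphResolvent T G Y) (hT : T.IsClosed)
    (hdense : Dense (T.domain : Set E)) {P : E →L[ℂ] E} (hP : IsSelfAdjoint P) (hPP : P * P = G)
    (x : E) : P x ∈ T.domain := by
  have hPPx : ∀ u, P (P u) = G u := DFunLike.congr_fun hPP
  have hinj : Function.Injective P :=
    .of_comp (f := P) (hPP ▸ h.injective : Function.Injective (P * P))
  have hrange : DenseRange P := denseRange_of_isSelfAdjoint_of_injective hP hinj
  have hbound : ∀ u, ‖Y u‖ ≤ 1 * ‖P u‖ := by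
    intro u
    have hinner : ⟪P u, P u⟫ = ⟪G u, G u⟫ + ⟪Y u, Y u⟫ := by
      rw [← h.inner_apply_apply hdense, ← hPPx, ← ContinuousLinearMap.adjoint_inner_left,
        hP.adjoint_eq]
    have hnorm : ‖P u‖ ^ 2 = ‖G u‖ ^ 2 + ‖Y u‖ ^ 2 := by
      simp only [inner_self_eq_norm_sq_to_K] at hinner
      exact_mod_cast hinner
    rw [one_mul]
    exact le_of_sq_le_sq (by linarith [sq_nonneg ‖G u‖]) (norm_nonneg _)
  let Z : E →L[ℂ] F := (Y : E →ₗ[ℂ] F).extendOfNorm (P : E →ₗ[ℂ] E)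
  have hZ : ∀ u, Z (P u) = Y u := LinearMap.extendOfNorm_eq hrange ⟨1, hbound⟩
  have hgraph : (P x, Z x) ∈ T.graph := by
    refine hrange.induction_on x (hT.preimage (P.continuous.prodMk Z.continuous)) fun u => ?_
    rw [hPPx, hZ]
    exact h.mem_graph u
  exact LinearPMap.mem_domain_of_mem_graph hgraph

end IsGraphResolvent

theorem exists_commute_mul_self_eq {G : E →L[ℂ] E} (hG0 : 0 ≤ G) (hG1 : G ≤ 1) :
    ∃ P C : E →L[ℂ] E, 0 ≤ P ∧ 0 ≤ C ∧ Commute P C ∧ P * P = G ∧ C * C = 1 - G := by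
  have hcomm : Commute G (1 - G) := (Commute.one_right G).sub_right (Commute.refl G)
  exact ⟨CFC.sqrt G, CFC.sqrt (1 - G), CFC.sqrt_nonneg _, CFC.sqrt_nonneg _,
    ((hcomm.cfcₙ_nnreal _).symm.cfcₙ_nnreal _).symm, CFC.sqrt_mul_sqrt_self _ hG0,
    CFC.sqrt_mul_sqrt_self _ (sub_nonneg.2 hG1)⟩

theorem exists_isSqrtOf_adjoint_comp_self [CompleteSpace F] {T : E →ₗ.[ℂ] F} (hT : T.IsClosed)
    (hdense : Dense (T.domain : Set E)) :
    ∃ A R : E →ₗ.[ℂ] E, IsSelfAdjoint A ∧ A.IsNonneg ∧ IsSelfAdjoint R ∧ R.IsNonneg ∧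
      IsSqrtOf R A ∧ R.domain ≤ T.domain ∧
      ∀ x z, (x, z) ∈ A.graph ↔ ∃ y, (x, y) ∈ T.graph ∧ (y, z) ∈ T.adjoint.graph := by
  obtain ⟨G, Y, h⟩ := exists_isGraphResolvent hT hdense
  have hG0 : 0 ≤ G := h.nonneg hdense
  have hG1 : 0 ≤ 1 - G := sub_nonneg.2 (h.le_one hdense)
  have hcomm : Commute G (1 - G) := (Commute.one_right G).sub_right (Commute.refl G)
  have hcop := isCoprimePair_of_add_eq_one (P := (G : E →ₗ[ℂ] E)) (C := (1 - G : E →L[ℂ] E))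
    (LinearMap.ext fun x => add_sub_cancel (G x) x)
  obtain ⟨P, C, hP, hC, hPC, hPP, hCC⟩ := exists_commute_mul_self_eq hG0 (h.le_one hdense)
  have hP_inj : Function.Injective P :=
    .of_comp (f := P) (hPP ▸ h.injective : Function.Injective (P * P))
  have hPP' : (P : E →ₗ[ℂ] E) * P = G := congrArg ContinuousLinearMap.toLinearMap hPP
  have hCC' : (C : E →ₗ[ℂ] E) * C = (1 - G : E →L[ℂ] E) :=
    congrArg ContinuousLinearMap.toLinearMap hCC
  have hPC' : Commute (P : E →ₗ[ℂ] E) C := congrArg ContinuousLinearMap.toLinearMap hPC.eq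
  have hcop' := isCoprimePair_of_mul_self_add_mul_self_eq_one hPC' <| by
    rw [hPP', hCC']
    exact LinearMap.ext fun x => add_sub_cancel (G x) x
  have hsqrt := isSqrtOf_rightDiv hP_inj hPC' hcop'
  rw [hPP', hCC'] at hsqrt
  refine ⟨_, _, isSelfAdjoint_rightDiv (.of_nonneg hG0) (.of_nonneg hG1) h.injective hcomm hcop,
    isNonneg_rightDiv hG0 hG1 h.injective hcomm,
    isSelfAdjoint_rightDiv (.of_nonneg hP) (.of_nonneg hC) hP_inj hPC hcop',
    isNonneg_rightDiv hP hC hP_inj hPC, hsqrt, ?_,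
    fun x z => h.mem_graph_rightDiv_one_sub_iff hdense⟩
  rw [rightDiv_domain]
  rintro _ ⟨x, rfl⟩
  exact h.apply_mem_domain hT hdense (.of_nonneg hP) hPP x

end VonNeumann

section Span

variable {R E F ι : Type*} [Ring R] [AddCommGroup E] [Module R E] [AddCommGroup F] [Module R F]

theorem range_domRestrict_span_subset {f : E →ₗ.[R] F} {u : ι → E} {v : ι → F}
    (huv : ∀ i, (u i, v i) ∈ f.graph) :
    Set.range (f.domRestrict (Submodule.span R (Set.range u))) ⊆
      Submodule.span R (Set.range v) := by
  let K := Submodule.span R (Set.range fun i => (u i, v i))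
  have hK : K ≤ f.graph := Submodule.span_le.2 (Set.range_subset_iff.2 huv)
  have hfst : K.map (LinearMap.fst R E F) = Submodule.span R (Set.range u) := by
    rw [Submodule.map_span, ← Set.range_comp]; rfl
  have hsnd : K.map (LinearMap.snd R E F) = Submodule.span R (Set.range v) := by
    rw [Submodule.map_span, ← Set.range_comp]; rfl
  rintro _ ⟨x, rfl⟩
  obtain ⟨⟨a, b⟩, hab, hax⟩ := hfst.ge x.2.1
  have hx : ((x : E), f.domRestrict _ x) ∈ f.graph :=
    LinearPMap.le_graph_of_le LinearPMap.domRestrict_le (LinearPMap.mem_graph _ x)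
  have hb : b = f.domRestrict _ x := f.mem_graph_snd_inj (hK hab) hx hax
  exact hsnd.le ⟨(a, b), hab, hb⟩

end Span

section Core

variable {R E F : Type*} [CommRing R] [AddCommGroup E] [AddCommGroup F] [Module R E] [Module R F]
  [TopologicalSpace R] [TopologicalSpace E] [TopologicalSpace F] [ContinuousAdd E]
  [ContinuousAdd F] [ContinuousSMul R E] [ContinuousSMul R F]

theorem graph_closure_le (f : E →ₗ.[R] F) : f.closure.graph ≤ f.graph.topologicalClosure := by
  by_cases hf : f.IsClosable
  · exact hf.graph_closure_eq_closure_graph.ge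
  · rw [LinearPMap.closure_def' hf]
    exact f.graph.le_topologicalClosure

theorem closure_le_of_isClosed {f g : E →ₗ.[R] F} (hg : g.IsClosed) (h : f ≤ g) :
    f.closure ≤ g :=
  LinearPMap.le_of_le_graph <| (graph_closure_le f).trans <|
    Submodule.topologicalClosure_minimal _ (LinearPMap.le_graph_of_le h) hg

theorem dense_range_domRestrict_of_hasCore {f : E →ₗ.[R] F} {D : Submodule R E}
    (hD : f.HasCore D) (hf : Dense (Set.range f)) : Dense (Set.range (f.domRestrict D)) := by
  refine dense_closure.1 (hf.mono ?_)
  rintro _ ⟨x, rfl⟩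
  have hx : ((x : E), f x) ∈ closure ((f.domRestrict D).graph : Set (E × F)) :=
    graph_closure_le _ (hD.closure_eq.symm ▸ f.mem_graph x)
  refine map_mem_closure (f := Prod.snd) continuous_snd hx ?_
  rintro ⟨a, b⟩ hab
  obtain ⟨ha, rfl⟩ := mem_graph_iff_exists_apply_eq.1 hab
  exact ⟨⟨a, ha⟩, rfl⟩

end Core

section Friedrichs

variable {E : Type*} [NormedAddCommGroup E] [InnerProductSpace ℂ E] [CompleteSpace E]
  {A R S : E →ₗ.[ℂ] E}

namespace IsFriedrichsExtOf

theorem exists_mem_graph_sqrt (h : IsFriedrichsExtOf A R S) {f g : E} (hfg : (f, g) ∈ S.graph) :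
    ∃ y, (f, y) ∈ R.graph ∧ (y, g) ∈ R.graph := by
  obtain ⟨-, -, hSA, -, -, hsqrt, -⟩ := h
  exact (isSqrtOf_iff_mem_graph.1 hsqrt f g).1 (LinearPMap.le_graph_of_le hSA hfg)

theorem hasCore (h : IsFriedrichsExtOf A R S) (hS : Dense (S.domain : Set E)) :
    R.HasCore S.domain := by
  obtain ⟨-, -, -, hR, -, -, hmax⟩ := id h
  have hSR : S.domain ≤ R.domain := fun f hf =>
    (h.exists_mem_graph_sqrt (S.mem_graph ⟨f, hf⟩)).elim fun _ hy =>
      LinearPMap.mem_domain_of_mem_graph hy.1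
  have hclosable : (R.domRestrict S.domain).IsClosable :=
    hR.isClosed.isClosable.leIsClosable LinearPMap.domRestrict_le
  set T := (R.domRestrict S.domain).closure
  have hrestrict : R.domRestrict S.domain ≤ T := LinearPMap.le_closure _
  have hTR : T ≤ R := closure_le_of_isClosed hR.isClosed LinearPMap.domRestrict_le
  have hT : Dense (T.domain : Set E) :=
    hS.mono fun f hf => hrestrict.1 ⟨hf, hSR hf⟩
  obtain ⟨B, sB, hB, hB0, hsB, hsB0, hsqrt, hdom, hgraph⟩ :=
    exists_isSqrtOf_adjoint_comp_self hclosable.closure_isClosed hT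
  have hSB : S ≤ B := by
    refine LinearPMap.le_of_le_graph fun ⟨f, g⟩ hfg => (hgraph f g).2 ?_
    obtain ⟨y, hfy, hyg⟩ := h.exists_mem_graph_sqrt hfg
    have hf : f ∈ S.domain := LinearPMap.mem_domain_of_mem_graph hfg
    have hfT : f ∈ T.domain := hrestrict.1 ⟨hf, hSR hf⟩
    obtain ⟨hfR, rfl⟩ := mem_graph_iff_exists_apply_eq.1 hfy
    have hTf : T ⟨f, hfT⟩ = R ⟨f, hfR⟩ := hTR.2 rfl
    refine ⟨_, mem_graph_iff_exists_apply_eq.2 ⟨hfT, hTf⟩, ?_⟩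
    exact (mem_graph_adjoint_iff hT).2 fun a b hab =>
      (mem_graph_iff_of_isSelfAdjoint hR).1 hyg a b (LinearPMap.le_graph_of_le hTR hab)
  have hRT : R.domain ≤ T.domain := (hmax B sB hB hB0 hSB hsB hsB0 hsqrt).1.trans hdom
  exact ⟨hSR, LinearPMap.eq_of_le_of_domain_eq hTR (hTR.1.antisymm hRT)⟩

end IsFriedrichsExtOf

end Friedrichs

section RieszSystem

variable {E : Type*} [NormedAddCommGroup E] [InnerProductSpace ℂ E] [CompleteSpace E]

theorem isGRS_of_isONB_of_mem_graph {R : E →ₗ.[ℂ] E} (hR : IsSelfAdjoint R) (hpos : R.IsPositive)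
    {φ e : ℕ → E} (he : IsONB e) (hφe : ∀ n, (φ n, e n) ∈ R.graph)
    (hdom : ∀ n, e n ∈ R.domain) : IsGRS φ := by
  have hker := ker_eq_bot_of_isPositive hpos
  refine ⟨R.inverse, R, e, isSelfAdjoint_inverse hR hker, hR, isPositive_inverse hpos, hpos,
    fun x => ?_, fun y => ?_, he, fun n => ?_⟩
  · exact mem_graph_iff_exists_apply_eq.1 <|
      (mem_graph_inverse_iff hker).1 (R.inverse.mem_graph x)
  · exact mem_graph_iff_exists_apply_eq.1 <| (mem_graph_inverse_iff hker).2 (R.mem_graph y)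
  · obtain ⟨hen, hφ⟩ :=
      mem_graph_iff_exists_apply_eq.1 ((mem_graph_inverse_iff hker).2 (hφe n))
    exact ⟨hen, hdom n, hφ.symm⟩

end RieszSystem

/-- If the Friedrichs extension `A_F = e^{-Q}` of the operator `S` associated with a semi-regular
sequence `{φ_n}` is positive, then `{φ_n}` is a generalized Riesz system: the vectors
`e_n := e^{-Q/2} φ_n = sAF φ_n` form an orthonormal basis of `H` and `φ_n = e^{Q/2} e_n`. -/
theorem GRS_of_friedrichs_positive
    (φ ψ : ℕ → H)
    (hbi : ∀ n m, ⟪ψ n, φ m⟫ = if n = m then (1 : ℂ) else 0)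
    (hcomp : Dense ((Submodule.span ℂ (Set.range φ) : Submodule ℂ H) : Set H))
    (S : H →ₗ.[ℂ] H)
    (hdom : S.domain = Submodule.span ℂ (Set.range φ))
    (hS : ∀ n, ∃ h : φ n ∈ S.domain, S ⟨φ n, h⟩ = ψ n)
    (AF sAF : H →ₗ.[ℂ] H) (hAF : IsFriedrichsExtOf AF sAF S)
    (hpos : AF.IsPositive) :
    (∃ e : ℕ → H, IsONB e ∧
        ∀ n, ∃ h : φ n ∈ sAF.domain, e n = sAF ⟨φ n, h⟩) ∧
    IsGRS φ := by
  have hφ_graph : ∀ n, (φ n, ψ n) ∈ S.graph := fun n => mem_graph_iff_exists_apply_eq.2 (hS n)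
  choose e hφe heψ using fun n => hAF.exists_mem_graph_sqrt (hφ_graph n)
  have hcore := hAF.hasCore (hdom ▸ hcomp)
  obtain ⟨-, -, -, hsqrt_sa, hsqrt_nonneg, hsqrt, -⟩ := hAF
  have hker := ker_eq_bot_of_isSqrtOf hsqrt (ker_eq_bot_of_isPositive hpos)
  have horth : Orthonormal ℂ e := orthonormal_iff_ite.2 fun n m => by
    rw [← hbi n m]
    exact ((mem_graph_iff_of_isSelfAdjoint hsqrt_sa).1 (hφe m) _ _ (heψ n)).symm
  have hdense : Dense (Submodule.span ℂ (Set.range e) : Set H) :=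
    (dense_range_domRestrict_of_hasCore (hdom ▸ hcore)
      (dense_range_of_isSelfAdjoint_of_ker_eq_bot hsqrt_sa hker)).mono
      (range_domRestrict_span_subset hφe)
  refine ⟨⟨e, ⟨horth, hdense⟩, fun n => ?_⟩, ?_⟩
  · exact (mem_graph_iff_exists_apply_eq.1 (hφe n)).imp fun _ => Eq.symm
  · exact isGRS_of_isONB_of_mem_graph hsqrt_sa
      (isPositive_of_isNonneg hsqrt_sa hsqrt_nonneg hker) ⟨horth, hdense⟩ hφe
      fun n => LinearPMap.mem_domain_of_mem_graph (heψ n)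
end
end

section
/- A semi-regular sequence {φ_n} in a Hilbert space H is a Bessel sequence with bound b (i.e., Σ_n |⟨f, φ_n⟩|² ≤ b‖f‖² for all f ∈ H) if and only if {φ_n} is a generalized Riesz system φ_n = e^{Q/2}e_n where Q is a self-adjoint operator with σ(Q) ⊆ (-∞, ln b] and {e_n} is an orthonormal basis of H. -/
/-!
For a Bessel sequence `φ`, let `T : f ↦ (⟪φ n, f⟫)ₙ` be the analysis operator, the adjoint of the
synthesis operator `R`, and let `E = |T| = |R*|` be its modulus. Completeness of `φ` makes `T`,
hence `E`, injective, so that `E` has an unbounded inverse, self-adjoint like `E`. Biorthogonality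
says that `T` maps `ψ n` to the `n`-th unit vector, so `e n = E (ψ n)` is orthonormal and
`E (e n) = T† T (ψ n) = φ n`. Moreover `T` is `E` followed by the analysis operator of `e`. Since
`‖T f‖ = ‖E f‖` for all `f` and `E` has dense range, the analysis operator of `e` is isometric, so
`e` is complete. The bound `b` is carried by `‖E‖ ≤ √b`, which for a positive operator means
`σ(E) ⊆ [0, √b]`; conversely, `⟪f, E (e n)⟫ = ⟪E f, e n⟫` and Bessel's inequality for `e` recover
the Bessel bound of `φ`.
-/

open scoped ComplexInnerProductSpace

noncomputable section

variable {H : Type*} [NormedAddCommGroup H] [InnerProductSpace ℂ H] [CompleteSpace H]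

open scoped InnerProductSpace lp
open ContinuousLinearMap (adjoint adjoint_inner_left adjoint_inner_right)

section Bessel

variable {𝕜 V W ι : Type*} [RCLike 𝕜] [NormedAddCommGroup V] [InnerProductSpace 𝕜 V]
  [NormedAddCommGroup W] [InnerProductSpace 𝕜 W] {φ : ι → V} {b : ℝ}

variable (𝕜) in
/-- `φ` is a Bessel family with bound `b`. Summability is part of the definition, since `∑'` is `0`
on families that are not summable. -/
def IsBessel (φ : ι → V) (b : ℝ) : Prop :=
  ∀ f : V, Summable (fun i ↦ ‖⟪f, φ i⟫_𝕜‖ ^ 2) ∧ ∑' i, ‖⟪f, φ i⟫_𝕜‖ ^ 2 ≤ b * ‖f‖ ^ 2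

lemma isBessel_of_orthonormal (hφ : Orthonormal 𝕜 φ) : IsBessel 𝕜 φ 1 := fun f ↦ by
  simp only [norm_inner_symm f, one_mul]
  exact ⟨hφ.inner_products_summable f, hφ.tsum_inner_products_le f⟩

lemma IsBessel.mono {c : ℝ} (hφ : IsBessel 𝕜 φ b) (hbc : b ≤ c) : IsBessel 𝕜 φ c :=
  fun f ↦ ⟨(hφ f).1, (hφ f).2.trans (by gcongr)⟩

lemma IsBessel.map [CompleteSpace V] [CompleteSpace W] (hφ : IsBessel 𝕜 φ b) (hb : 0 ≤ b)
    (A : V →L[𝕜] W) : IsBessel 𝕜 (fun i ↦ A (φ i)) (b * ‖A‖ ^ 2) := fun f ↦ by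
  simp only [← adjoint_inner_left]
  refine ⟨(hφ _).1, (hφ _).2.trans ?_⟩
  calc b * ‖adjoint A f‖ ^ 2 ≤ b * (‖adjoint A‖ * ‖f‖) ^ 2 := by
        gcongr
        exact (adjoint A).le_opNorm f
    _ = b * ‖A‖ ^ 2 * ‖f‖ ^ 2 := by rw [LinearIsometryEquiv.norm_map]; ring

lemma IsBessel.memℓp_inner (hφ : IsBessel 𝕜 φ b) (f : V) : Memℓp (fun i ↦ ⟪φ i, f⟫_𝕜) 2 :=
  memℓp_gen <| by simpa [norm_inner_symm f] using (hφ f).1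

lemma IsBessel.norm_mk_inner_le (hφ : IsBessel 𝕜 φ b) (f : V) :
    ‖(⟨fun i ↦ ⟪φ i, f⟫_𝕜, hφ.memℓp_inner f⟩ : ℓ²(ι, 𝕜))‖ ≤ √b * ‖f‖ := by
  rw [← Real.sqrt_sq (norm_nonneg f), ← Real.sqrt_mul' b (sq_nonneg _)]
  refine Real.le_sqrt_of_sq_le (le_of_eq_of_le ?_ (hφ f).2)
  simpa [norm_inner_symm f] using lp.norm_rpow_eq_tsum (p := 2) (by simp)
    (⟨fun i ↦ ⟪φ i, f⟫_𝕜, hφ.memℓp_inner f⟩ : ℓ²(ι, 𝕜))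

/-- The analysis operator `f ↦ (⟪φ i, f⟫)ᵢ` of a Bessel family, adjoint to the synthesis operator
`c ↦ ∑ cᵢ φ i`. -/
def IsBessel.analysis (hφ : IsBessel 𝕜 φ b) : V →L[𝕜] ℓ²(ι, 𝕜) :=
  LinearMap.mkContinuous
    { toFun := fun f ↦ ⟨fun i ↦ ⟪φ i, f⟫_𝕜, hφ.memℓp_inner f⟩
      map_add' := fun _ _ ↦ by ext; exact inner_add_right _ _ _
      map_smul' := fun _ _ ↦ by ext; exact inner_smul_right _ _ _ }
    (√b) hφ.norm_mk_inner_le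

@[simp]
lemma IsBessel.analysis_apply (hφ : IsBessel 𝕜 φ b) (f : V) (i : ι) :
    hφ.analysis f i = ⟪φ i, f⟫_𝕜 := rfl

lemma IsBessel.norm_analysis_le (hφ : IsBessel 𝕜 φ b) : ‖hφ.analysis‖ ≤ √b :=
  LinearMap.mkContinuous_norm_le _ (Real.sqrt_nonneg b) _

lemma mem_orthogonal_span_range_iff {f : V} :
    f ∈ (Submodule.span 𝕜 (Set.range φ))ᗮ ↔ ∀ i, ⟪φ i, f⟫_𝕜 = 0 := by
  have h : f ∈ (Submodule.span 𝕜 (Set.range φ))ᗮ ↔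
      Submodule.span 𝕜 (Set.range φ) ≤ LinearMap.ker (innerₛₗ 𝕜 f) :=
    Submodule.mem_orthogonal' _ _
  simp [h, Submodule.span_le, Set.range_subset_iff, inner_eq_zero_symm (x := f)]

lemma IsBessel.ker_analysis (hφ : IsBessel 𝕜 φ b) :
    hφ.analysis.ker = (Submodule.span 𝕜 (Set.range φ))ᗮ := by
  ext f
  rw [mem_orthogonal_span_range_iff]
  exact lp.ext_iff.trans funext_iff

lemma IsBessel.injective_analysis_iff_dense_span [CompleteSpace V] (hφ : IsBessel 𝕜 φ b) :
    Function.Injective hφ.analysis ↔ Dense (Submodule.span 𝕜 (Set.range φ) : Set V) := by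
  rw [Submodule.dense_iff_topologicalClosure_eq_top, Submodule.topologicalClosure_eq_top_iff,
    ← hφ.ker_analysis]
  exact LinearMap.ker_eq_bot.symm

variable [DecidableEq ι]

lemma IsBessel.adjoint_analysis_single [CompleteSpace V] (hφ : IsBessel 𝕜 φ b) (i : ι) :
    adjoint hφ.analysis (lp.single 2 i 1) = φ i := by
  refine ext_inner_right 𝕜 fun f ↦ ?_
  rw [adjoint_inner_left, lp.inner_single_left]
  simp

lemma IsBessel.analysis_eq_single_of_biorthogonal {ψ : ι → V} (hφ : IsBessel 𝕜 φ b)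
    (hψ : ∀ i j, ⟪ψ i, φ j⟫_𝕜 = if i = j then 1 else 0) (i : ι) :
    hφ.analysis (ψ i) = lp.single 2 i 1 := by
  ext j
  rw [hφ.analysis_apply, ← inner_conj_symm, hψ, lp.coeFn_single, Pi.single_apply]
  simp [eq_comm, apply_ite]

variable (𝕜 ι) in
lemma orthonormal_lp_single : Orthonormal 𝕜 fun i : ι ↦ (lp.single 2 i 1 : ℓ²(ι, 𝕜)) := by
  simp [orthonormal_iff_ite, lp.inner_single_left, Pi.single_apply]

end Bessel

section Inverse

variable {R V W : Type*} [Ring R] [AddCommGroup V] [Module R V] [TopologicalSpace V]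
  [AddCommGroup W] [Module R W] [TopologicalSpace W] {A : V →L[R] W}

/-- The inverse `A⁻¹ : range A → V` of a continuous operator, as a partially defined operator. It is
meaningful only for injective `A`. -/
def inversePMap (A : V →L[R] W) : W →ₗ.[R] V :=
  ((A : V →ₗ[R] W).toPMap ⊤).inverse

lemma mem_inversePMap_domain {y : W} : y ∈ (inversePMap A).domain ↔ ∃ x, A x = y := by
  simp [inversePMap, LinearPMap.inverse_domain, LinearMap.toPMap]

lemma inversePMap_apply (hA : Function.Injective A) (x : V)
    (hx : A x ∈ (inversePMap A).domain) : inversePMap A ⟨A x, hx⟩ = x := by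
  refine LinearPMap.inverse_apply_eq (x := ⟨x, Submodule.mem_top⟩) ?_ rfl
  exact LinearMap.ker_eq_bot.2 fun _ _ h ↦ Subtype.ext (hA h)

lemma apply_inversePMap (hA : Function.Injective A) (y : (inversePMap A).domain) :
    A (inversePMap A y) = y := by
  obtain ⟨_, hy⟩ := y
  obtain ⟨x, rfl⟩ := mem_inversePMap_domain.1 hy
  rw [inversePMap_apply hA]

end Inverse

section AdjointInverse

variable {𝕜 V W : Type*} [RCLike 𝕜] [NormedAddCommGroup V] [InnerProductSpace 𝕜 V]
  [NormedAddCommGroup W] [InnerProductSpace 𝕜 W] {A : V →L[𝕜] W}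

lemma denseRange_iff_injective_adjoint [CompleteSpace V] [CompleteSpace W] :
    DenseRange A ↔ Function.Injective (adjoint A) := by
  have h : DenseRange A ↔ Dense (A.range : Set W) := Iff.rfl
  rw [h, Submodule.dense_iff_topologicalClosure_eq_top, Submodule.topologicalClosure_eq_top_iff,
    A.orthogonal_range]
  exact LinearMap.ker_eq_bot

lemma adjoint_inversePMap [CompleteSpace V] [CompleteSpace W] (hA : Function.Injective A)
    (hd : DenseRange A) : (inversePMap A).adjoint = inversePMap (adjoint A) := by
  have hA' : Function.Injective (adjoint A) := denseRange_iff_injective_adjoint.1 hd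
  have hdom : Dense ((inversePMap A).domain : Set W) :=
    hd.mono fun _ ↦ mem_inversePMap_domain.2
  have hformal : (inversePMap A).IsFormalAdjoint (inversePMap (adjoint A)) := fun x y ↦ by
    rw [← apply_inversePMap hA' y, adjoint_inner_right, apply_inversePMap hA x]
  have hle : inversePMap (adjoint A) ≤ (inversePMap A).adjoint := hformal.le_adjoint hdom
  have happly (y : (inversePMap A).adjoint.domain) : adjoint A ((inversePMap A).adjoint y) = y := by
    refine ext_inner_right 𝕜 fun x ↦ ?_
    have hx : A x ∈ (inversePMap A).domain := mem_inversePMap_domain.2 ⟨x, rfl⟩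
    calc ⟪adjoint A ((inversePMap A).adjoint y), x⟫_𝕜
        = ⟪(inversePMap A).adjoint y, A x⟫_𝕜 := adjoint_inner_left _ _ _
      _ = ⟪(y : V), inversePMap A ⟨A x, hx⟩⟫_𝕜 :=
          LinearPMap.adjoint_isFormalAdjoint hdom y ⟨A x, hx⟩
      _ = ⟪(y : V), x⟫_𝕜 := by rw [inversePMap_apply hA]
  exact (LinearPMap.eq_of_le_of_domain_eq hle <| le_antisymm hle.1 fun y hy ↦
    mem_inversePMap_domain.2 ⟨_, happly ⟨y, hy⟩⟩).symm

variable {E : V →L[𝕜] V}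

lemma denseRange_of_isSelfAdjoint_of_injective_s9 [CompleteSpace V] (hE : IsSelfAdjoint E)
    (hinj : Function.Injective E) : DenseRange E :=
  denseRange_iff_injective_adjoint.2 (by rwa [hE.adjoint_eq])

lemma isSelfAdjoint_inversePMap [CompleteSpace V] (hE : IsSelfAdjoint E)
    (hinj : Function.Injective E) : IsSelfAdjoint (inversePMap E) := by
  rw [LinearPMap.isSelfAdjoint_def,
    adjoint_inversePMap hinj (denseRange_of_isSelfAdjoint_of_injective_s9 hE hinj), hE.adjoint_eq]

lemma re_inner_inversePMap_nonneg (hE : E.IsPositive) (hinj : Function.Injective E)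
    (y : (inversePMap E).domain) : 0 ≤ RCLike.re ⟪inversePMap E y, (y : V)⟫_𝕜 := by
  rw [← apply_inversePMap hinj y]
  exact hE.re_inner_nonneg_right _

end AdjointInverse

lemma norm_map_of_denseRange {X V W : Type*} [SeminormedAddCommGroup V]
    [SeminormedAddCommGroup W] {g : X → V} {u : V → W} (hg : DenseRange g) (hu : Continuous u)
    (h : ∀ x, ‖u (g x)‖ = ‖g x‖) (v : V) : ‖u v‖ = ‖v‖ :=
  hg.induction_on v (isClosed_eq hu.norm continuous_norm) h

lemma spectrum_subset_Icc_iff_norm_le {A : Type*} [CStarAlgebra A] [PartialOrder A]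
    [StarOrderedRing A] {a : A} {r : ℝ} (ha : 0 ≤ a) (hr : 0 ≤ r) :
    spectrum ℝ a ⊆ Set.Icc 0 r ↔ ‖a‖ ≤ r := by
  rw [CStarAlgebra.norm_le_iff_le_algebraMap a hr, le_algebraMap_iff_spectrum_le]
  exact ⟨fun h x hx ↦ (h hx).2, fun h x hx ↦ ⟨spectrum_nonneg_of_nonneg ha hx, h x hx⟩⟩

section Modulus

variable {K : Type*} [NormedAddCommGroup K] [InnerProductSpace ℂ K] [CompleteSpace K]

/-- The modulus `|T| = (T† T)^{1/2}` of a bounded operator between Hilbert spaces. -/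
def modulus (T : H →L[ℂ] K) : H →L[ℂ] H :=
  CFC.sqrt (adjoint T ∘L T)

variable (T : H →L[ℂ] K)

lemma modulus_nonneg : 0 ≤ modulus T := CFC.sqrt_nonneg _

lemma modulus_isPositive : (modulus T).IsPositive :=
  (ContinuousLinearMap.nonneg_iff_isPositive _).1 (modulus_nonneg T)

lemma modulus_modulus_apply (f : H) : modulus T (modulus T f) = adjoint T (T f) := by
  have hTT : 0 ≤ adjoint T ∘L T :=
    (ContinuousLinearMap.nonneg_iff_isPositive _).2 T.isPositive_adjoint_comp_self
  exact DFunLike.congr_fun (CFC.sqrt_mul_sqrt_self (adjoint T ∘L T) hTT) f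

lemma inner_modulus_modulus (f g : H) : ⟪modulus T f, modulus T g⟫ = ⟪T f, T g⟫ := by
  rw [← (modulus_isPositive T).inner_left_eq_inner_right, modulus_modulus_apply,
    adjoint_inner_left]

lemma norm_modulus_apply (f : H) : ‖modulus T f‖ = ‖T f‖ := by
  simp only [@norm_eq_sqrt_re_inner ℂ, inner_modulus_modulus]

lemma norm_modulus : ‖modulus T‖ = ‖T‖ := ContinuousLinearMap.opNorm_ext _ _ (norm_modulus_apply T)

variable {T}

lemma injective_modulus_iff : Function.Injective (modulus T) ↔ Function.Injective T := by
  simp only [injective_iff_map_eq_zero, ← norm_eq_zero (a := modulus T _), norm_modulus_apply,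
    norm_eq_zero]

lemma orthonormal_modulus_comp_iff {ι : Type*} {v : ι → H} :
    (Orthonormal ℂ fun i ↦ modulus T (v i)) ↔ Orthonormal ℂ fun i ↦ T (v i) := by
  classical
  simp only [orthonormal_iff_ite, inner_modulus_modulus]

end Modulus

section Biorthogonal

variable {ι : Type*} {φ ψ : ι → H} {b : ℝ}

lemma IsBessel.spectrum_modulus_analysis_subset (hφ : IsBessel ℂ φ b) :
    spectrum ℝ (modulus hφ.analysis) ⊆ Set.Icc 0 (√b) := by
  rw [spectrum_subset_Icc_iff_norm_le (modulus_nonneg hφ.analysis) (Real.sqrt_nonneg b),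
    norm_modulus]
  exact hφ.norm_analysis_le

variable [DecidableEq ι]

lemma IsBessel.modulus_analysis_modulus_analysis (hφ : IsBessel ℂ φ b)
    (hψ : ∀ i j, ⟪ψ i, φ j⟫ = if i = j then (1 : ℂ) else 0) (i : ι) :
    modulus hφ.analysis (modulus hφ.analysis (ψ i)) = φ i := by
  rw [modulus_modulus_apply, hφ.analysis_eq_single_of_biorthogonal hψ, hφ.adjoint_analysis_single]

lemma IsBessel.orthonormal_modulus_analysis (hφ : IsBessel ℂ φ b)
    (hψ : ∀ i j, ⟪ψ i, φ j⟫ = if i = j then (1 : ℂ) else 0) :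
    Orthonormal ℂ fun i ↦ modulus hφ.analysis (ψ i) :=
  orthonormal_modulus_comp_iff.2 <| by
    simpa only [hφ.analysis_eq_single_of_biorthogonal hψ] using orthonormal_lp_single ℂ ι

lemma IsBessel.dense_span_modulus_analysis (hφ : IsBessel ℂ φ b)
    (hψ : ∀ i j, ⟪ψ i, φ j⟫ = if i = j then (1 : ℂ) else 0)
    (hd : DenseRange (modulus hφ.analysis)) :
    Dense (Submodule.span ℂ (Set.range fun i ↦ modulus hφ.analysis (ψ i)) : Set H) := by
  have he := isBessel_of_orthonormal (hφ.orthonormal_modulus_analysis hψ)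
  have hfactor (f : H) : he.analysis (modulus hφ.analysis f) = hφ.analysis f := by
    ext i
    rw [he.analysis_apply, hφ.analysis_apply,
      ← (modulus_isPositive hφ.analysis).inner_left_eq_inner_right,
      hφ.modulus_analysis_modulus_analysis hψ]
  have hisometric : ∀ f, ‖he.analysis f‖ = ‖f‖ :=
    norm_map_of_denseRange hd he.analysis.continuous fun f ↦ by
      rw [hfactor, norm_modulus_apply]
  exact he.injective_analysis_iff_dense_span.1
    (AddMonoidHomClass.isometry_of_norm _ hisometric).injective

theorem bessel_iff_GRS_spectrum_bounded_general (hb : 0 ≤ b)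
    (hbi : ∀ i j, ⟪ψ i, φ j⟫ = if i = j then (1 : ℂ) else 0)
    (hcomp : Dense (Submodule.span ℂ (Set.range φ) : Set H)) :
    IsBessel ℂ φ b ↔
    ∃ (E : H →L[ℂ] H) (F : H →ₗ.[ℂ] H) (e : ι → H),
      IsSelfAdjoint E ∧ (∀ f : H, 0 ≤ (⟪E f, f⟫).re) ∧ Function.Injective E ∧
      spectrum ℝ E ⊆ Set.Icc 0 (√b) ∧ DenseRange E ∧
      IsSelfAdjoint F ∧ (∀ y : F.domain, 0 ≤ (⟪F y, (y : H)⟫).re) ∧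
      (∀ x : H, ∃ h : E x ∈ F.domain, F ⟨E x, h⟩ = x) ∧
      (∀ y : F.domain, E (F y) = (y : H)) ∧
      (Orthonormal ℂ e ∧ Dense (Submodule.span ℂ (Set.range e) : Set H)) ∧
      ∀ i, e i ∈ F.domain ∧ φ i = E (e i) := by
  constructor
  · intro hφ
    let E := modulus hφ.analysis
    have hpos : E.IsPositive := modulus_isPositive hφ.analysis
    have hinj : Function.Injective E :=
      injective_modulus_iff.2 (hφ.injective_analysis_iff_dense_span.2 hcomp)
    have hd : DenseRange E := denseRange_of_isSelfAdjoint_of_injective_s9 hpos.isSelfAdjoint hinj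
    have hmem (x : H) : E x ∈ (inversePMap E).domain := mem_inversePMap_domain.2 ⟨x, rfl⟩
    exact ⟨E, inversePMap E, fun i ↦ E (ψ i), hpos.isSelfAdjoint, hpos.re_inner_nonneg_left, hinj,
      hφ.spectrum_modulus_analysis_subset, hd, isSelfAdjoint_inversePMap hpos.isSelfAdjoint hinj,
      re_inner_inversePMap_nonneg hpos hinj,
      fun x ↦ ⟨hmem x, inversePMap_apply hinj x _⟩, apply_inversePMap hinj,
      ⟨hφ.orthonormal_modulus_analysis hbi, hφ.dense_span_modulus_analysis hbi hd⟩,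
      fun i ↦ ⟨hmem _, (hφ.modulus_analysis_modulus_analysis hbi i).symm⟩⟩
  · rintro ⟨E, F, e, hsa, hpos, -, hspec, -, -, -, -, -, ⟨he, -⟩, hφ⟩
    have hE : 0 ≤ E := (ContinuousLinearMap.nonneg_iff_isPositive E).2
      (ContinuousLinearMap.isPositive_def'.2 ⟨hsa, hpos⟩)
    have hnorm : 1 * ‖E‖ ^ 2 ≤ b := by
      rw [one_mul, ← Real.le_sqrt (norm_nonneg E) hb,
        ← spectrum_subset_Icc_iff_norm_le hE (Real.sqrt_nonneg b)]
      exact hspec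
    rw [funext fun i ↦ (hφ i).2]
    exact ((isBessel_of_orthonormal he).map zero_le_one E).mono hnorm

end Biorthogonal

/-- A semi-regular sequence `{φ_n}` (minimal with biorthogonal `{ψ_n}`, and complete) is a
Bessel sequence with bound `b` if and only if it is a generalized Riesz system
`φ_n = e^{Q/2} e_n` with `σ(Q) ⊆ (-∞, ln b]`.  Here `E = e^{Q/2}` is encoded as a bounded
positive injective self-adjoint operator with `σ(E) ⊆ [0, √b]` and dense range, and
`F = e^{-Q/2}` as its (possibly unbounded) positive self-adjoint inverse, with
`e_n ∈ D(E) ∩ D(F)`. -/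
theorem bessel_iff_GRS_spectrum_bounded
    (φ ψ : ℕ → H) (b : ℝ) (hb : 0 < b)
    (hbi : ∀ n m, ⟪ψ n, φ m⟫ = if n = m then (1 : ℂ) else 0)
    (hcomp : Dense ((Submodule.span ℂ (Set.range φ) : Submodule ℂ H) : Set H)) :
    (∀ f : H, Summable (fun n => ‖⟪f, φ n⟫‖ ^ 2) ∧ ∑' n, ‖⟪f, φ n⟫‖ ^ 2 ≤ b * ‖f‖ ^ 2)
    ↔
    (∃ (E : H →L[ℂ] H) (F : H →ₗ.[ℂ] H) (e : ℕ → H),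
      IsSelfAdjoint E ∧ (∀ f : H, 0 ≤ (⟪E f, f⟫).re) ∧ Function.Injective E ∧
      spectrum ℝ E ⊆ Set.Icc 0 (Real.sqrt b) ∧ Dense (Set.range E) ∧
      IsSelfAdjoint F ∧ (∀ y : F.domain, 0 ≤ (⟪F y, (y : H)⟫).re) ∧
      (∀ x : H, ∃ h : E x ∈ F.domain, F ⟨E x, h⟩ = x) ∧
      (∀ y : F.domain, E (F y) = (y : H)) ∧
      IsONB e ∧
      ∀ n, e n ∈ F.domain ∧ φ n = E (e n)) := by
  exact bessel_iff_GRS_spectrum_bounded_general hb.le hbi hcomp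
end
end
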